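/- arXiv:1204.5637 — 2 statements merged into one kernel-verified Lean document; each statement's English description precedes it below -/
import Mathlib

section
/- Let n ≥ 1 be an integer and a > 0. Let X₁ and X₂ be independent random points uniformly distributed in the closed ball of radius a in ℝⁿ, and let D = |X₁ - X₂| be their Euclidean distance. Then for every real s > -n, E[(D/(2a))^s] = (n Γ(n+1)/Γ((n+1)/2)) · Γ((n+s+1)/2)/((n+s) Γ(n + s/2 + 1)). -/
open MeasureTheory ProbabilityTheory Real

/-- The uniform probability measure on the closed ball of radius `a` centered at the origin
in `ℝⁿ`: normalized Lebesgue measure restricted to the ball. -/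
noncomputable def uniformBall (n : ℕ) (a : ℝ) : Measure (EuclideanSpace ℝ (Fin n)) :=
  (volume (Metric.closedBall (0 : EuclideanSpace ℝ (Fin n)) a))⁻¹ •
    volume.restrict (Metric.closedBall (0 : EuclideanSpace ℝ (Fin n)) a)


lemma polar_lintegral (m : ℕ) (f : EuclideanSpace ℝ (Fin (m+1)) → ENNReal) (hf : Measurable f) :
    ∫⁻ z, f z = ∫⁻ u, (∫⁻ r in Set.Ioi (0:ℝ), ENNReal.ofReal (r ^ m) *
      f (r • (u : EuclideanSpace ℝ (Fin (m+1)))))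
      ∂((volume : Measure (EuclideanSpace ℝ (Fin (m+1)))).toSphere) := by
  have h1 : ∫⁻ z, f z = ∫⁻ z : ({0}ᶜ : Set (EuclideanSpace ℝ (Fin (m+1)))), f z
      ∂(volume.comap Subtype.val) := by
    rw [lintegral_subtype_comap (measurableSet_singleton _).compl f, restrict_compl_singleton]
  have h2 := (Measure.measurePreserving_homeomorphUnitSphereProd
    (volume : Measure (EuclideanSpace ℝ (Fin (m+1))))).lintegral_comp_emb
    (Homeomorph.measurableEmbedding _)
    (fun q => f (q.2.1 • (q.1 : EuclideanSpace ℝ (Fin (m+1)))))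
  rw [h1]
  have h3 : ∀ z : ({0}ᶜ : Set (EuclideanSpace ℝ (Fin (m+1)))),
      ((homeomorphUnitSphereProd _ z).2.1 • ((homeomorphUnitSphereProd _ z).1 : EuclideanSpace ℝ (Fin (m+1)))) = z := by
    intro z
    have hz : (z : EuclideanSpace ℝ (Fin (m+1))) ≠ 0 := z.2
    simp [smul_smul, hz]
  simp only [h3] at h2
  rw [h2, lintegral_prod]
  · refine lintegral_congr fun u => ?_
    have hm : Measurable fun r : ℝ => f (r • (u : EuclideanSpace ℝ (Fin (m+1)))) := by fun_prop
    rw [Measure.volumeIoiPow, lintegral_withDensity_eq_lintegral_mul _ (by fun_prop) (by fun_prop)]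
    simp only [Pi.mul_apply, finrank_euclideanSpace_fin, Nat.add_sub_cancel]
    rw [lintegral_subtype_comap measurableSet_Ioi (fun r : ℝ => ENNReal.ofReal (r ^ m) *
      f (r • (u : EuclideanSpace ℝ (Fin (m+1)))))]
  · apply Measurable.aemeasurable
    fun_prop

lemma lint_rpow {q c : ℝ} (hq : -1 < q) (hc : 0 ≤ c) :
    ∫⁻ r in Set.Ioc 0 c, ENNReal.ofReal (r ^ q) = ENNReal.ofReal (c ^ (q+1) / (q+1)) := by
  rw [← ofReal_integral_eq_lintegral_ofReal, ← intervalIntegral.integral_of_le hc,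
    integral_rpow (Or.inl hq), zero_rpow (by linarith), sub_zero]
  · exact (intervalIntegrable_iff_integrableOn_Ioc_of_le hc).1 (intervalIntegral.intervalIntegrable_rpow' hq)
  · filter_upwards [ae_restrict_mem measurableSet_Ioc] with y hy
    exact rpow_nonneg hy.1.le _

lemma gauss_integrable {q : ℝ} (hq : -1 < q) :
    IntegrableOn (fun x : ℝ => x ^ q * exp (-x ^ 2)) (Set.Ioi 0) := by
  have := integrableOn_rpow_mul_exp_neg_rpow hq (p := 2) (by norm_num)
  simpa using this

lemma gauss_integral {q : ℝ} (hq : -1 < q) :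
    ∫ x in Set.Ioi (0:ℝ), x ^ q * exp (-x ^ 2) = Gamma ((q+1)/2) / 2 := by
  have := integral_rpow_mul_exp_neg_rpow (p := 2) (by norm_num) hq
  simp only [rpow_two] at this
  rw [this]; ring

lemma lint_gauss {q : ℝ} (hq : -1 < q) :
    ∫⁻ x in Set.Ioi (0:ℝ), ENNReal.ofReal (x ^ q * exp (-x ^ 2)) = ENNReal.ofReal (Gamma ((q+1)/2) / 2) := by
  rw [← ofReal_integral_eq_lintegral_ofReal (gauss_integrable hq), gauss_integral hq]
  filter_upwards [ae_restrict_mem measurableSet_Ioi] with y hy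
  exact mul_nonneg (rpow_nonneg (le_of_lt hy) _) (exp_pos _).le

lemma cap_lintegral (m : ℕ) {s : ℝ} (hs : 0 < m + 1 + s) (x : EuclideanSpace ℝ (Fin (m+1))) :
    ∫⁻ z in {z | ‖z‖ ^ 2 ≤ 2 * inner ℝ x z}, ENNReal.ofReal (‖z‖ ^ s) =
    ENNReal.ofReal (2 ^ (m + 1 + s) / (m+1+s)) * ∫⁻ u, ENNReal.ofReal ((max (inner ℝ x (u : EuclideanSpace ℝ (Fin (m+1)))) 0) ^ (m+1+s))
      ∂((volume : Measure (EuclideanSpace ℝ (Fin (m+1)))).toSphere) := by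
  have hms : MeasurableSet {z : EuclideanSpace ℝ (Fin (m+1)) | ‖z‖ ^ 2 ≤ 2 * inner ℝ x z} :=
    measurableSet_le (by fun_prop) (by fun_prop)
  rw [← lintegral_indicator hms, polar_lintegral m _ (Measurable.indicator (by fun_prop) hms),
    ← lintegral_const_mul _ (by fun_prop)]
  refine lintegral_congr fun u => ?_
  set c := inner ℝ x (u : EuclideanSpace ℝ (Fin (m+1))) with hc
  have hu : ‖(u : EuclideanSpace ℝ (Fin (m+1)))‖ = 1 := by simp
  have h0 : 0 ≤ max c 0 := le_max_right _ _
  calc _ = ∫⁻ r in Set.Ioi (0:ℝ), (Set.Ioc 0 (2 * max c 0)).indicator (fun r => ENNReal.ofReal (r ^ (m + s))) r := by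
        refine setLIntegral_congr_fun measurableSet_Ioi fun r hr => ?_
        have hr' : (0:ℝ) < r := hr
        simp only [Set.indicator, Set.mem_ofPred_eq, Set.mem_Ioc, norm_smul, hu, inner_smul_right, ← hc,
          Real.norm_eq_abs, abs_of_pos hr', mul_one, hr', true_and]
        have : r ^ 2 ≤ 2 * (r * c) ↔ r ≤ 2 * max c 0 := by
          constructor
          · intro h
            have : r ≤ 2 * c := by nlinarith
            linarith [le_max_left c 0]
          · intro h
            have : 0 < c := by
              by_contra hcc
              rw [max_eq_right (not_lt.1 hcc)] at h
              linarith
            rw [max_eq_left this.le] at h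
            nlinarith
        simp only [this]
        split_ifs
        · rw [← ENNReal.ofReal_mul (by positivity), rpow_add hr', rpow_natCast]
        · simp
    _ = _ := by
        rw [setLIntegral_indicator measurableSet_Ioc, Set.inter_eq_left.2 (fun y hy => hy.1),
          lint_rpow (by linarith) (by positivity), ← ENNReal.ofReal_mul (by positivity),
          mul_rpow (by norm_num) h0]
        ring_nf

lemma gauss_polar (m : ℕ) {p : ℝ} (hp : 0 < p) (x : EuclideanSpace ℝ (Fin (m+1))) :
    ∫⁻ z, ENNReal.ofReal ((max (inner ℝ x z) 0) ^ p * exp (-‖z‖^2)) =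
    ENNReal.ofReal (Gamma ((m + 1 + p)/2) / 2) * ∫⁻ u, ENNReal.ofReal ((max (inner ℝ x (u : EuclideanSpace ℝ (Fin (m+1)))) 0) ^ p)
      ∂((volume : Measure (EuclideanSpace ℝ (Fin (m+1)))).toSphere) := by
  rw [polar_lintegral m _ (by fun_prop), ← lintegral_const_mul _ (by fun_prop)]
  refine lintegral_congr fun u => ?_
  set c := inner ℝ x (u : EuclideanSpace ℝ (Fin (m+1))) with hc
  have hu : ‖(u : EuclideanSpace ℝ (Fin (m+1)))‖ = 1 := by simp
  have h0 : 0 ≤ max c 0 := le_max_right _ _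
  calc _ = ∫⁻ r in Set.Ioi (0:ℝ), ENNReal.ofReal (r ^ (m + p) * exp (-r^2)) * ENNReal.ofReal (max c 0 ^ p) := by
        refine setLIntegral_congr_fun measurableSet_Ioi fun r hr => ?_
        have hr' : (0:ℝ) < r := hr
        simp only [norm_smul, hu, inner_smul_right, ← hc,
          Real.norm_eq_abs, abs_of_pos hr', mul_one]
        have : max (r * c) 0 = r * max c 0 := by
          rw [mul_max_of_nonneg _ _ hr'.le, mul_zero]
        rw [this, mul_rpow hr'.le h0, ← ENNReal.ofReal_mul (by positivity), ← ENNReal.ofReal_mul (by positivity),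
          rpow_add hr', rpow_natCast]
        ring_nf
    _ = _ := by
        rw [lintegral_mul_const _ (by fun_prop), lint_gauss (by linarith)]
        ring_nf

lemma gauss_prod (m : ℕ) {p : ℝ} (hp : 0 < p) :
    ∫⁻ z : EuclideanSpace ℝ (Fin (m+1)), ENNReal.ofReal ((max (z 0) 0) ^ p * exp (-‖z‖^2)) =
    ENNReal.ofReal (Gamma ((p + 1)/2) / 2 * (√π) ^ m) := by
  let f : Fin (m+1) → ℝ → ℝ := Fin.cons (fun x => max x 0 ^ p * exp (-x^2)) (fun _ x => exp (-x^2))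
  have hf0 : ∀ x, f 0 x = (Set.Ioi (0:ℝ)).indicator (fun x => x ^ p * exp (-x^2)) x := by
    intro x
    simp only [f, Fin.cons_zero, Set.indicator, Set.mem_Ioi]
    split_ifs with h
    · rw [max_eq_left h.le]
    · rw [max_eq_right (not_lt.1 h), zero_rpow hp.ne', zero_mul]
  have hi0 : Integrable (f 0) := by
    rw [funext hf0, integrable_indicator_iff measurableSet_Ioi]
    exact gauss_integrable (by linarith)
  have hI0 : ∫ x, f 0 x = Gamma ((p+1)/2) / 2 := by
    simp_rw [hf0]
    rw [integral_indicator measurableSet_Ioi, gauss_integral (by linarith)]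
  have hfs : ∀ i : Fin m, f i.succ = fun x => exp (-1 * x^2) := by intro i; simp [f]
  have hint : Integrable (fun x : Fin (m+1) → ℝ => ∏ i, f i (x i)) := by
    apply Integrable.fintype_prod
    intro i
    refine Fin.cases hi0 (fun i => ?_) i
    rw [hfs]; exact integrable_exp_neg_mul_sq one_pos
  rw [← (PiLp.volume_preserving_toLp (Fin (m+1))).lintegral_comp_emb (MeasurableEquiv.toLp 2 (Fin (m+1) → ℝ)).measurableEmbedding]
  have e : ∀ x : Fin (m+1) → ℝ, (max ((WithLp.toLp 2 x : EuclideanSpace ℝ (Fin (m+1))) 0) 0) ^ p *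
      exp (-‖(WithLp.toLp 2 x : EuclideanSpace ℝ (Fin (m+1)))‖^2) = ∏ i, f i (x i) := by
    intro x
    rw [EuclideanSpace.norm_sq_eq, Fin.prod_univ_succ, Fin.sum_univ_succ, neg_add, exp_add, ← Finset.sum_neg_distrib, exp_sum]
    simp [f, mul_assoc]
  simp_rw [e]
  rw [← ofReal_integral_eq_lintegral_ofReal hint, integral_fintype_prod_volume_eq_prod, Fin.prod_univ_succ, hI0]
  · simp_rw [hfs, integral_gaussian]; simp
  · refine Filter.Eventually.of_forall fun x => ?_
    show 0 ≤ ∏ i, f i (x i)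
    rw [← e]; positivity

lemma gauss_dir (m : ℕ) {p : ℝ} (hp : 0 < p) (x : EuclideanSpace ℝ (Fin (m+1))) :
    ∫⁻ z, ENNReal.ofReal ((max (inner ℝ x z) 0) ^ p * exp (-‖z‖^2)) =
    ENNReal.ofReal (‖x‖ ^ p * (Gamma ((p + 1)/2) / 2 * (√π) ^ m)) := by
  have hn : ‖‖x‖ • (EuclideanSpace.single 0 (1:ℝ) : EuclideanSpace ℝ (Fin (m+1)))‖ = ‖x‖ := by
    simp [norm_smul]
  let R := (Submodule.span ℝ {‖x‖ • (EuclideanSpace.single 0 (1:ℝ) : EuclideanSpace ℝ (Fin (m+1))) - x})ᗮ.reflection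
  have hR : R (‖x‖ • EuclideanSpace.single 0 (1:ℝ)) = x := Submodule.reflection_sub hn
  rw [← R.measurePreserving.lintegral_comp_emb R.toHomeomorph.measurableEmbedding]
  have e : ∀ z, inner ℝ x (R z) = ‖x‖ * z 0 := by
    intro z
    conv_lhs => rw [← hR]
    rw [LinearIsometryEquiv.inner_map_map, real_inner_smul_left, EuclideanSpace.inner_single_left]
    simp
  simp_rw [e, LinearIsometryEquiv.norm_map]
  have : ∀ z : EuclideanSpace ℝ (Fin (m+1)), ENNReal.ofReal (max (‖x‖ * z 0) 0 ^ p * exp (-‖z‖^2)) =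
      ENNReal.ofReal (‖x‖ ^ p) * ENNReal.ofReal (max (z 0) 0 ^ p * exp (-‖z‖^2)) := by
    intro z
    rw [← ENNReal.ofReal_mul (by positivity), ← mul_assoc, ← mul_rpow (norm_nonneg _) (le_max_right _ _),
      mul_max_of_nonneg _ _ (norm_nonneg _), mul_zero]
  simp_rw [this]
  rw [lintegral_const_mul _ (by fun_prop), gauss_prod m hp, ← ENNReal.ofReal_mul (by positivity)]

lemma sphere_dir (m : ℕ) {p : ℝ} (hp : 0 < p) (x : EuclideanSpace ℝ (Fin (m+1))) :
    ∫⁻ u, ENNReal.ofReal ((max (inner ℝ x (u : EuclideanSpace ℝ (Fin (m+1)))) 0) ^ p)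
      ∂((volume : Measure (EuclideanSpace ℝ (Fin (m+1)))).toSphere) =
    ENNReal.ofReal (Gamma ((p + 1)/2) * (√π) ^ m / Gamma ((m + 1 + p)/2)) * ENNReal.ofReal (‖x‖ ^ p) := by
  have h := gauss_polar m hp x
  rw [gauss_dir m hp x] at h
  have hG : 0 < Gamma ((m+1+p)/2) := Gamma_pos_of_pos (by positivity)
  have hG' : 0 < Gamma ((p+1)/2) := Gamma_pos_of_pos (by positivity)
  have hne : ENNReal.ofReal (Gamma ((m + 1 + p)/2) / 2) ≠ 0 := by
    rw [ne_eq, ENNReal.ofReal_eq_zero]; push Not; positivity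
  rw [← ENNReal.mul_right_inj hne ENNReal.ofReal_ne_top, ← h, ← ENNReal.ofReal_mul (by positivity),
    ← ENNReal.ofReal_mul (by positivity)]
  congr 1
  field_simp

lemma ball_rpow (m : ℕ) {p a : ℝ} (hp : 0 < p) (ha : 0 < a) :
    ∫⁻ x in Metric.closedBall (0 : EuclideanSpace ℝ (Fin (m+1))) a, ENNReal.ofReal (‖x‖ ^ p) =
    ENNReal.ofReal (a ^ (m+1+p) / (m+1+p)) * ((m+1 : ℕ) * volume (Metric.ball (0 : EuclideanSpace ℝ (Fin (m+1))) 1)) := by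
  rw [← lintegral_indicator measurableSet_closedBall,
    polar_lintegral m _ (Measurable.indicator (by fun_prop) measurableSet_closedBall)]
  have : ∀ u : Metric.sphere (0 : EuclideanSpace ℝ (Fin (m+1))) 1, ∫⁻ r in Set.Ioi (0:ℝ), ENNReal.ofReal (r ^ m) *
      (Metric.closedBall (0 : EuclideanSpace ℝ (Fin (m+1))) a).indicator (fun x => ENNReal.ofReal (‖x‖ ^ p)) (r • (u : EuclideanSpace ℝ (Fin (m+1)))) = ENNReal.ofReal (a ^ (m+1+p) / (m+1+p)) := by
    intro u
    have hu : ‖(u : EuclideanSpace ℝ (Fin (m+1)))‖ = 1 := by simp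
    calc _ = ∫⁻ r in Set.Ioi (0:ℝ), (Set.Ioc 0 a).indicator (fun r => ENNReal.ofReal (r ^ (m + p))) r := by
          refine setLIntegral_congr_fun measurableSet_Ioi fun r hr => ?_
          have hr' : (0:ℝ) < r := hr
          simp only [Set.indicator, mem_closedBall_zero_iff, Set.mem_Ioc, norm_smul, hu,
            Real.norm_eq_abs, abs_of_pos hr', mul_one, hr', true_and]
          split_ifs
          · rw [← ENNReal.ofReal_mul (by positivity), rpow_add hr', rpow_natCast]
          · simp
      _ = _ := by
          rw [setLIntegral_indicator measurableSet_Ioc, Set.inter_eq_left.2 (fun y hy => hy.1),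
            lint_rpow (by linarith) (by positivity)]
          ring_nf
  simp_rw [this]
  rw [lintegral_const, Measure.toSphere_apply_univ, finrank_euclideanSpace_fin]

lemma double_split (m : ℕ) (a s : ℝ) :
    ∫⁻ x in Metric.closedBall (0 : EuclideanSpace ℝ (Fin (m+1))) a,
      ∫⁻ y in Metric.closedBall (0 : EuclideanSpace ℝ (Fin (m+1))) a, ENNReal.ofReal (dist x y ^ s) =
    2 * ∫⁻ x in Metric.closedBall (0 : EuclideanSpace ℝ (Fin (m+1))) a,
      ∫⁻ y in Metric.closedBall (0 : EuclideanSpace ℝ (Fin (m+1))) ‖x‖, ENNReal.ofReal (dist x y ^ s) := by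
  classical
  let k : EuclideanSpace ℝ (Fin (m+1)) × EuclideanSpace ℝ (Fin (m+1)) → ENNReal :=
    fun q => ENNReal.ofReal (dist q.1 q.2 ^ s)
  have hk : Measurable k := by fun_prop
  let S1 : Set (EuclideanSpace ℝ (Fin (m+1)) × EuclideanSpace ℝ (Fin (m+1))) :=
    {q | ‖q.2‖ ≤ ‖q.1‖ ∧ ‖q.1‖ ≤ a}
  let S2 : Set (EuclideanSpace ℝ (Fin (m+1)) × EuclideanSpace ℝ (Fin (m+1))) :=
    {q | ‖q.1‖ < ‖q.2‖ ∧ ‖q.2‖ ≤ a}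
  have hS1 : MeasurableSet S1 :=
    MeasurableSet.inter
      (measurableSet_le (f := fun q : EuclideanSpace ℝ (Fin (m+1)) × EuclideanSpace ℝ (Fin (m+1)) => ‖q.2‖) (g := fun q : EuclideanSpace ℝ (Fin (m+1)) × EuclideanSpace ℝ (Fin (m+1)) => ‖q.1‖)
        (by fun_prop) (by fun_prop))
      (measurableSet_le (f := fun q : EuclideanSpace ℝ (Fin (m+1)) × EuclideanSpace ℝ (Fin (m+1)) => ‖q.1‖) (g := fun _ : EuclideanSpace ℝ (Fin (m+1)) × EuclideanSpace ℝ (Fin (m+1)) => a)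
        (by fun_prop) (by fun_prop))
  have hS2 : MeasurableSet S2 :=
    MeasurableSet.inter
      (measurableSet_lt (f := fun q : EuclideanSpace ℝ (Fin (m+1)) × EuclideanSpace ℝ (Fin (m+1)) => ‖q.1‖) (g := fun q : EuclideanSpace ℝ (Fin (m+1)) × EuclideanSpace ℝ (Fin (m+1)) => ‖q.2‖)
        (by fun_prop) (by fun_prop))
      (measurableSet_le (f := fun q : EuclideanSpace ℝ (Fin (m+1)) × EuclideanSpace ℝ (Fin (m+1)) => ‖q.2‖) (g := fun _ : EuclideanSpace ℝ (Fin (m+1)) × EuclideanSpace ℝ (Fin (m+1)) => a)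
        (by fun_prop) (by fun_prop))
  have m1 : Measurable (S1.indicator k) := hk.indicator hS1
  have m2 : Measurable (S2.indicator k) := hk.indicator hS2
  have hL : ∫⁻ x in Metric.closedBall (0 : EuclideanSpace ℝ (Fin (m+1))) a,
      ∫⁻ y in Metric.closedBall (0 : EuclideanSpace ℝ (Fin (m+1))) a, ENNReal.ofReal (dist x y ^ s) =
      ∫⁻ x, ∫⁻ y, (S1.indicator k (x, y) + S2.indicator k (x, y)) := by
    rw [← lintegral_indicator measurableSet_closedBall]
    refine lintegral_congr fun x => ?_
    by_cases hx : ‖x‖ ≤ a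
    · rw [Set.indicator_of_mem (by simpa using hx), ← lintegral_indicator measurableSet_closedBall]
      refine lintegral_congr fun y => ?_
      simp only [Set.indicator, mem_closedBall_zero_iff, S1, S2, Set.mem_ofPred_eq, hx, and_true]
      by_cases h1 : ‖y‖ ≤ ‖x‖
      · simp [h1, h1.trans hx, not_lt.2 h1, k]
      · simp [h1, not_le.1 h1, k]
    · rw [Set.indicator_of_notMem (by simpa using hx)]
      symm
      rw [lintegral_eq_zero_iff (by fun_prop)]
      refine Filter.Eventually.of_forall fun y => ?_
      have : ¬ (‖x‖ < ‖y‖ ∧ ‖y‖ ≤ a) := fun h => hx (h.1.le.trans h.2)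
      simp [Set.indicator, S1, S2, hx, this]
  have hR : ∫⁻ x in Metric.closedBall (0 : EuclideanSpace ℝ (Fin (m+1))) a,
      ∫⁻ y in Metric.closedBall (0 : EuclideanSpace ℝ (Fin (m+1))) ‖x‖, ENNReal.ofReal (dist x y ^ s) =
      ∫⁻ x, ∫⁻ y, S1.indicator k (x, y) := by
    rw [← lintegral_indicator measurableSet_closedBall]
    refine lintegral_congr fun x => ?_
    by_cases hx : ‖x‖ ≤ a
    · rw [Set.indicator_of_mem (by simpa using hx), ← lintegral_indicator measurableSet_closedBall]
      refine lintegral_congr fun y => ?_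
      simp [Set.indicator, S1, hx, k]
    · rw [Set.indicator_of_notMem (by simpa using hx)]
      simp [Set.indicator, S1, hx]
  have h12 : ∫⁻ x, ∫⁻ y, S2.indicator k (x, y) = ∫⁻ x, ∫⁻ y, S1.indicator k (x, y) := by
    rw [lintegral_lintegral_swap (f := fun x y => S2.indicator k (x, y)) m2.aemeasurable]
    refine lintegral_congr fun x => ?_
    refine lintegral_congr_ae ?_
    have h0 : ∀ᵐ y : EuclideanSpace ℝ (Fin (m+1)), y ∉ Metric.sphere (0 : EuclideanSpace ℝ (Fin (m+1))) ‖x‖ := by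
      exact measure_eq_zero_iff_ae_notMem.1 <| Measure.addHaar_sphere volume (0 : EuclideanSpace ℝ (Fin (m+1))) ‖x‖
    filter_upwards [h0] with y hy
    have hy' : ‖y‖ ≠ ‖x‖ := by simpa using hy
    have : ‖y‖ < ‖x‖ ↔ ‖y‖ ≤ ‖x‖ := ⟨le_of_lt, fun h => lt_of_le_of_ne h hy'⟩
    simp [Set.indicator, S1, S2, k, this, dist_comm]
  rw [hL, hR]
  have : ∀ x, ∫⁻ y, (S1.indicator k (x, y) + S2.indicator k (x, y)) =
      (∫⁻ y, S1.indicator k (x, y)) + ∫⁻ y, S2.indicator k (x, y) := fun x =>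
    lintegral_add_left (f := fun y => S1.indicator k (x, y)) (by fun_prop) _
  simp_rw [this]
  rw [lintegral_add_left m1.lintegral_prod_right', h12, two_mul]

lemma inner_ball (m : ℕ) (s : ℝ) (x : EuclideanSpace ℝ (Fin (m+1))) :
    ∫⁻ y in Metric.closedBall (0 : EuclideanSpace ℝ (Fin (m+1))) ‖x‖, ENNReal.ofReal (dist x y ^ s) =
    ∫⁻ z in {z | ‖z‖ ^ 2 ≤ 2 * inner ℝ x z}, ENNReal.ofReal (‖z‖ ^ s) := by
  classical
  have hms : MeasurableSet {z : EuclideanSpace ℝ (Fin (m+1)) | ‖z‖ ^ 2 ≤ 2 * inner ℝ x z} :=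
    measurableSet_le (by fun_prop) (by fun_prop)
  rw [← lintegral_indicator hms, ← lintegral_indicator measurableSet_closedBall,
    ← lintegral_sub_left_eq_self _ x]
  refine lintegral_congr fun y => ?_
  have : ‖x - y‖ ≤ ‖x‖ ↔ ‖y‖ ^ 2 ≤ 2 * inner ℝ x y := by
    rw [← sq_le_sq₀ (norm_nonneg _) (norm_nonneg x), norm_sub_sq_real]
    constructor <;> intro h <;> linarith
  simp only [Set.indicator, Set.mem_ofPred_eq, this, mem_closedBall_zero_iff, dist_eq_norm, sub_sub_cancel]

lemma double_value (m : ℕ) {a s : ℝ} (ha : 0 < a) (hs : 0 < m + 1 + s) :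
    ∫⁻ x in Metric.closedBall (0 : EuclideanSpace ℝ (Fin (m+1))) a,
      ∫⁻ y in Metric.closedBall (0 : EuclideanSpace ℝ (Fin (m+1))) a, ENNReal.ofReal (dist x y ^ s) =
    ENNReal.ofReal (2 * (2 ^ (m + 1 + s) / (m+1+s)) *
      (Gamma ((m + 1 + s + 1)/2) * (√π) ^ m / Gamma ((m + 1 + (m + 1 + s))/2)) *
      (a ^ (m+1+(m+1+s)) / (m+1+(m+1+s))) * (m+1)) * volume (Metric.ball (0 : EuclideanSpace ℝ (Fin (m+1))) 1) := by
  have hG : 0 < Gamma ((m+1+(m+1+s))/2) := Gamma_pos_of_pos (by positivity)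
  have hG' : 0 < Gamma ((m+1+s+1)/2) := Gamma_pos_of_pos (by positivity)
  rw [double_split]
  simp_rw [inner_ball, cap_lintegral m hs, sphere_dir m hs]
  rw [lintegral_const_mul _ (by fun_prop), lintegral_const_mul _ (by fun_prop), ball_rpow m hs ha]
  rw [ENNReal.ofReal_mul (q := (m : ℝ) + 1) (by positivity), ENNReal.ofReal_mul (by positivity), ENNReal.ofReal_mul (by positivity),
    ENNReal.ofReal_mul (by positivity)]
  have : ENNReal.ofReal ((m:ℝ)+1) = ((m+1 : ℕ) : ENNReal) := by
    rw [← ENNReal.ofReal_natCast]; push_cast; rfl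
  rw [this]
  simp only [ENNReal.ofReal_ofNat]
  ring

lemma final_alg (m : ℕ) {a s : ℝ} (ha : 0 < a) (hs : 0 < m + 1 + s) :
    let κ := √π ^ (m+1) / Gamma (((m:ℝ)+1) / 2 + 1)
    ((a ^ (m+1) * κ)⁻¹ * (a ^ (m+1) * κ)⁻¹) * ((2 * a) ^ (-s) * (2 * (2 ^ (m + 1 + s) / (m+1+s)) *
      (Gamma ((m + 1 + s + 1)/2) * (√π) ^ m / Gamma ((m + 1 + (m + 1 + s))/2)) *
      (a ^ (m+1+(m+1+s)) / (m+1+(m+1+s))) * (m+1) * κ)) =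
    ((m:ℝ) + 1) * Gamma ((m : ℝ) + 1 + 1) / Gamma (((m : ℝ) + 1 + 1) / 2) *
        (Gamma (((m : ℝ) + 1 + s + 1) / 2) / (((m : ℝ) + 1 + s) * Gamma ((m : ℝ) + 1 + s / 2 + 1))) := by
  intro κ
  have hG : 0 < Gamma ((m+1+(m+1+s))/2) := Gamma_pos_of_pos (by positivity)
  have hG1 : 0 < Gamma (((m:ℝ)+1)/2+1) := Gamma_pos_of_pos (by positivity)
  have hG2 : 0 < Gamma (((m:ℝ)+1+1)/2) := Gamma_pos_of_pos (by positivity)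
  have e1 : Gamma ((m : ℝ) + 1 + s / 2 + 1) = (m+1+(m+1+s))/2 * Gamma ((m+1+(m+1+s))/2) := by
    rw [← Gamma_add_one (by positivity)]; congr 1; ring
  have e2 := Gamma_mul_Gamma_add_half (((m:ℝ)+1+1)/2)
  have e3 : ((m:ℝ)+1+1)/2 + 1/2 = ((m:ℝ)+1)/2+1 := by ring
  have e4 : 2 * (((m:ℝ)+1+1)/2) = (m:ℝ)+1+1 := by ring
  have e5 : (1 - ((m:ℝ)+1+1)) = -((m+1 : ℕ):ℝ) := by push_cast; ring
  rw [e3, e4, e5, rpow_neg (by norm_num), rpow_natCast] at e2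
  have e6 : Gamma ((m:ℝ)+1+1) = Gamma (((m:ℝ)+1+1)/2) * Gamma (((m:ℝ)+1)/2+1) * 2 ^ (m+1) / √π := by
    rw [e2]; field_simp
  have e7 : (2 * a) ^ (-s) = (2 ^ s)⁻¹ * (a ^ s)⁻¹ := by
    rw [rpow_neg (by positivity), mul_rpow (by norm_num) ha.le, mul_inv]
  have e8 : (2:ℝ) ^ ((m:ℝ) + 1 + s) = 2 ^ (m+1) * 2 ^ s := by
    rw [rpow_add (by norm_num)]; congr 1; exact_mod_cast rpow_natCast (2:ℝ) (m+1)
  have e9 : a ^ ((m:ℝ) + 1 + (m+1+s)) = a ^ (m+1) * (a ^ (m+1) * a ^ s) := by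
    have : a ^ ((m:ℝ)+1) = a ^ (m+1) := by exact_mod_cast rpow_natCast a (m+1)
    rw [rpow_add ha, rpow_add ha _ s, this]
  have p1 : 0 < (2:ℝ) ^ s := by positivity
  have p2 : 0 < a ^ s := by positivity
  have p3 : 0 < √π := by positivity
  rw [e1, e6, e7, e8, e9]
  simp only [κ]
  field_simp
  ring

/-- If `X₁, X₂` are independent uniform points in the closed ball of radius `a` in `ℝⁿ`
(`n ≥ 1`) and `D = |X₁ - X₂|`, then for every real `s > -n`,
`E[(D/(2a))^s] = (n Γ(n+1)/Γ((n+1)/2)) · Γ((n+s+1)/2)/((n+s) Γ(n+s/2+1))`. -/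
theorem dist_in_ball_moment {Ω : Type*} [MeasurableSpace Ω] (μ : Measure Ω)
    [IsProbabilityMeasure μ]
    (n : ℕ) (hn : 1 ≤ n) (a : ℝ) (ha : 0 < a)
    (X₁ X₂ : Ω → EuclideanSpace ℝ (Fin n)) (hX₁ : Measurable X₁) (hX₂ : Measurable X₂)
    (hlaw₁ : Measure.map X₁ μ = uniformBall n a)
    (hlaw₂ : Measure.map X₂ μ = uniformBall n a)
    (hindep : IndepFun X₁ X₂ μ)
    (s : ℝ) (hs : s > -(n : ℝ)) :
    ∫ ω, (dist (X₁ ω) (X₂ ω) / (2 * a)) ^ s ∂μ =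
      (n : ℝ) * Gamma ((n : ℝ) + 1) / Gamma (((n : ℝ) + 1) / 2) *
        (Gamma (((n : ℝ) + s + 1) / 2) / (((n : ℝ) + s) * Gamma ((n : ℝ) + s / 2 + 1))) := by
  obtain ⟨m, rfl⟩ : ∃ m, n = m + 1 := ⟨n - 1, by omega⟩
  have hs' : 0 < (m:ℝ) + 1 + s := by push_cast at hs; linarith
  have hG : 0 < Gamma ((m+1+(m+1+s))/2) := Gamma_pos_of_pos (by positivity)
  have hG' : 0 < Gamma ((m+1+s+1)/2) := Gamma_pos_of_pos (by positivity)
  have hG1 : 0 < Gamma (((m:ℝ)+1)/2+1) := Gamma_pos_of_pos (by positivity)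
  have : SFinite (uniformBall (m+1) a) := by rw [← hlaw₁]; infer_instance
  rw [integral_eq_lintegral_of_nonneg_ae
    (Filter.Eventually.of_forall fun ω => by simp only [Pi.zero_apply]; positivity)
    (by apply Measurable.aestronglyMeasurable; fun_prop)]
  let g : EuclideanSpace ℝ (Fin (m+1)) × EuclideanSpace ℝ (Fin (m+1)) → ENNReal :=
    fun q => ENNReal.ofReal ((dist q.1 q.2 / (2 * a)) ^ s)
  have hg : Measurable g := by fun_prop
  have h1 : ∫⁻ ω, ENNReal.ofReal ((dist (X₁ ω) (X₂ ω) / (2 * a)) ^ s) ∂μ =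
      ∫⁻ x, ∫⁻ y, g (x, y) ∂(uniformBall (m+1) a) ∂(uniformBall (m+1) a) := by
    rw [← lintegral_prod _ hg.aemeasurable]
    nth_rewrite 1 [← hlaw₁]
    rw [← hlaw₂, ← (indepFun_iff_map_prod_eq_prod_map_map hX₁.aemeasurable hX₂.aemeasurable).1 hindep,
      lintegral_map hg (by fun_prop)]
  have hgd : ∀ x y, g (x, y) = ENNReal.ofReal ((2 * a) ^ (-s)) * ENNReal.ofReal (dist x y ^ s) := by
    intro x y
    rw [← ENNReal.ofReal_mul (by positivity)]
    simp only [g]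
    rw [div_rpow dist_nonneg (by positivity), rpow_neg (by positivity), div_eq_inv_mul]
  have hin : ∀ x : EuclideanSpace ℝ (Fin (m+1)), ∫⁻ y, g (x, y) ∂(uniformBall (m+1) a) =
      (volume (Metric.closedBall (0 : EuclideanSpace ℝ (Fin (m+1))) a))⁻¹ *
      (ENNReal.ofReal ((2 * a) ^ (-s)) * ∫⁻ y in Metric.closedBall (0 : EuclideanSpace ℝ (Fin (m+1))) a,
        ENNReal.ofReal (dist x y ^ s)) := by
    intro x
    simp_rw [hgd]
    rw [lintegral_const_mul _ (by fun_prop), uniformBall, lintegral_smul_measure, smul_eq_mul]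
    ring
  have hmeas : Measurable fun x : EuclideanSpace ℝ (Fin (m+1)) =>
      ∫⁻ y in Metric.closedBall (0 : EuclideanSpace ℝ (Fin (m+1))) a,
        ENNReal.ofReal (dist x y ^ s) := by
    apply Measurable.lintegral_prod_right'
      (f := fun q : EuclideanSpace ℝ (Fin (m+1)) × EuclideanSpace ℝ (Fin (m+1)) =>
        ENNReal.ofReal (dist q.1 q.2 ^ s))
    fun_prop
  rw [h1]
  simp_rw [hin]
  rw [lintegral_const_mul _ (by fun_prop), lintegral_const_mul _ (by fun_prop), uniformBall,
    lintegral_smul_measure, double_value m ha hs', EuclideanSpace.volume_closedBall,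
    EuclideanSpace.volume_ball]
  have := final_alg m ha hs'
  simp only at this
  push_cast
  rw [← this]
  simp only [smul_eq_mul, ENNReal.toReal_mul, ENNReal.toReal_inv, ENNReal.toReal_pow, Fintype.card_fin]
  push_cast
  rw [ENNReal.toReal_ofReal ha.le, ENNReal.toReal_ofReal (by positivity),
    ENNReal.toReal_ofReal (by positivity), ENNReal.toReal_ofReal (by positivity),
    ENNReal.toReal_ofReal (by positivity)]
  ring
end

section
/- Let 0 < α ≤ 2 and let X be a real random variable whose characteristic function is E[e^{itX}] = e^{-|t|^α} for all real t (a symmetric α-stable variable). Then for every real s with -1 < s < α, E[|X|^s] = 2^s Γ((1+s)/2) Γ(1 - s/α) / (√π Γ(1 - s/2)). -/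
open MeasureTheory ProbabilityTheory Real Complex

lemma ss_one_sub_le {c y : ℝ} : 1 - Real.exp (-c * y) ≤ c * y := by
  have := Real.add_one_le_exp (-c * y); linarith

lemma ss_one_sub_nonneg {c y : ℝ} (hc : 0 ≤ c) (hy : 0 ≤ y) : 0 ≤ 1 - Real.exp (-c * y) := by
  have : Real.exp (-c * y) ≤ 1 := Real.exp_le_one_iff.2 (by nlinarith [mul_nonneg hc hy])
  linarith

lemma ss_A {a s c : ℝ} (ha : 0 < a) (hs : s < 0) (hc : 0 < c) :
    ∫⁻ t in Set.Ioi (0:ℝ), ENNReal.ofReal (t ^ (-s - 1) * Real.exp (-c * t ^ a)) =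
      ENNReal.ofReal (c ^ (s / a) * (Real.Gamma (1 - s / a) / |s|)) := by
  rw [← ofReal_integral_eq_lintegral_ofReal]
  · rw [_root_.integral_rpow_mul_exp_neg_mul_rpow ha (by linarith) hc]
    have e1 : -(-s - 1 + 1) / a = s / a := by ring
    have e2 : (-s - 1 + 1) / a = -(s / a) := by ring
    have h0 : -(s / a) ≠ 0 := neg_ne_zero.2 (div_ne_zero hs.ne ha.ne')
    have e3 : (1 : ℝ) - s / a = -(s / a) + 1 := by ring
    rw [e1, e2, e3, Real.Gamma_add_one h0, abs_of_neg hs]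
    congr 1
    have := hs.ne
    field_simp
  · exact integrableOn_rpow_mul_exp_neg_mul_rpow (by linarith) ha hc
  · filter_upwards [ae_restrict_mem measurableSet_Ioi] with t ht
    have : (0:ℝ) < t := ht
    simp only [Pi.zero_apply]
    positivity

lemma ss_A0 {r : ℝ} :
    ∫⁻ t in Set.Ioi (0:ℝ), ENNReal.ofReal (t ^ r) = ⊤ := by
  by_contra h
  apply not_integrableOn_Ioi_rpow r
  refine ⟨(by fun_prop : Measurable fun t : ℝ => t ^ r).aestronglyMeasurable, ?_⟩
  rw [hasFiniteIntegral_iff_ofReal]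
  · exact lt_top_iff_ne_top.2 h
  · filter_upwards [ae_restrict_mem measurableSet_Ioi] with t ht
    have : (0:ℝ) < t := ht
    simp only [Pi.zero_apply]
    positivity

lemma ss_B_int {a s c : ℝ} (hs : 0 < s) (hsa : s < a) (hc : 0 ≤ c) :
    IntegrableOn (fun t : ℝ => t ^ (-s - 1) * (1 - Real.exp (-c * t ^ a))) (Set.Ioi 0) := by
  have hm : Measurable (fun t : ℝ => t ^ (-s - 1) * (1 - Real.exp (-c * t ^ a))) := by fun_prop
  rw [← Set.Ioc_union_Ioi_eq_Ioi (zero_le_one : (0:ℝ) ≤ 1), integrableOn_union]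
  constructor
  · have h1 : IntegrableOn (fun t : ℝ => c * t ^ (a - s - 1)) (Set.Ioc 0 1) := by
      have := (intervalIntegrable_iff_integrableOn_Ioc_of_le zero_le_one).1
        (intervalIntegral.intervalIntegrable_rpow' (a := 0) (b := 1) (r := a - s - 1) (by linarith))
      exact this.const_mul c
    refine Integrable.mono' h1 hm.aestronglyMeasurable ?_
    filter_upwards [ae_restrict_mem measurableSet_Ioc] with t ht
    have h0 : 0 < t := ht.1
    have hn := ss_one_sub_nonneg hc (rpow_nonneg h0.le a)
    rw [Real.norm_of_nonneg (by positivity)]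
    calc t ^ (-s - 1) * (1 - Real.exp (-c * t ^ a)) ≤ t ^ (-s - 1) * (c * t ^ a) := by
          gcongr; exact ss_one_sub_le
      _ = c * t ^ (a - s - 1) := by
          rw [show a - s - 1 = (-s - 1) + a by ring, rpow_add h0]; ring
  · have h1 : IntegrableOn (fun t : ℝ => t ^ (-s - 1)) (Set.Ioi 1) :=
      integrableOn_Ioi_rpow_of_lt (by linarith) one_pos
    refine Integrable.mono' h1 hm.aestronglyMeasurable ?_
    filter_upwards [ae_restrict_mem measurableSet_Ioi] with t ht
    have h0 : 0 < t := zero_lt_one.trans ht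
    have hn := ss_one_sub_nonneg hc (rpow_nonneg h0.le a)
    rw [Real.norm_of_nonneg (by positivity)]
    have : 1 - Real.exp (-c * t ^ a) ≤ 1 := by linarith [Real.exp_pos (-c * t ^ a)]
    calc _ ≤ t ^ (-s - 1) * 1 := by gcongr
      _ = _ := mul_one _

open Filter Topology in
lemma ss_B_eq {a s c : ℝ} (hs : 0 < s) (hsa : s < a) (hc : 0 < c) :
    ∫ t in Set.Ioi (0:ℝ), t ^ (-s - 1) * (1 - Real.exp (-c * t ^ a)) =
      c ^ (s / a) * (Real.Gamma (1 - s / a) / |s|) := by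
  have ha : 0 < a := hs.trans hsa
  have hu : ∀ x ∈ Set.Ioi (0:ℝ), HasDerivAt (fun t : ℝ => 1 - Real.exp (-c * t ^ a))
      (c * a * x ^ (a - 1) * Real.exp (-c * x ^ a)) x := by
    intro x hx
    have h := (((Real.hasDerivAt_rpow_const (x := x) (p := a) (Or.inl (ne_of_gt hx))).const_mul
      (-c)).exp).const_sub 1
    exact h.congr_deriv (by ring)
  have hv : ∀ x ∈ Set.Ioi (0:ℝ), HasDerivAt (fun t : ℝ => -(1 / s) * t ^ (-s))
      (x ^ (-s - 1)) x := by
    intro x hx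
    have h := (Real.hasDerivAt_rpow_const (x := x) (p := -s) (Or.inl (ne_of_gt hx))).const_mul
      (-(1/s))
    exact h.congr_deriv (by field_simp)
  have hE : ∀ x ∈ Set.Ioi (0:ℝ), c * a * x ^ (a - 1) * Real.exp (-c * x ^ a) *
      (-(1 / s) * x ^ (-s)) = -(c * a / s) * (x ^ (a - s - 1) * Real.exp (-c * x ^ a)) := by
    intro x hx
    rw [show a - s - 1 = (a - 1) + (-s) by ring, rpow_add hx]
    ring
  have hIntg : IntegrableOn (fun x : ℝ => -(c * a / s) * (x ^ (a - s - 1) * Real.exp (-c * x ^ a)))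
      (Set.Ioi 0) :=
    (integrableOn_rpow_mul_exp_neg_mul_rpow (by linarith) ha hc).const_mul _
  have key := integral_Ioi_mul_deriv_eq_deriv_mul (a := (0:ℝ)) (a' := (0:ℝ)) (b' := (0:ℝ)) hu hv
    ?_ ?_ ?_ ?_
  · rw [setIntegral_congr_fun measurableSet_Ioi hE, integral_const_mul,
      _root_.integral_rpow_mul_exp_neg_mul_rpow ha (by linarith) hc] at key
    simp_rw [mul_comm] at key ⊢
    rw [key]
    have e1 : -(a - s - 1 + 1) / a = s / a - 1 := by field_simp; ring
    have e2 : (a - s - 1 + 1) / a = 1 - s / a := by field_simp; ring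
    rw [e1, e2, abs_of_pos hs, rpow_sub hc, rpow_one]
    field_simp
    ring
  · refine (ss_B_int hs hsa hc.le).congr_fun (fun x hx => ?_) measurableSet_Ioi
    simp [mul_comm]
  · exact hIntg.congr_fun (fun x hx => (hE x hx).symm) measurableSet_Ioi
  · have h1 : Tendsto (fun t : ℝ => (c / s) * t ^ (a - s)) (𝓝[>] 0) (𝓝 0) := by
      have : Tendsto (fun t : ℝ => (c / s) * t ^ (a - s)) (𝓝 0) (𝓝 ((c / s) * 0 ^ (a - s))) :=
        ((Real.continuousAt_rpow_const 0 (a - s) (Or.inr (by linarith))).tendsto).const_mul _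
      rw [zero_rpow (by linarith), mul_zero] at this
      exact this.mono_left nhdsWithin_le_nhds
    refine squeeze_zero_norm' ?_ h1
    filter_upwards [self_mem_nhdsWithin] with t ht
    have h0 : 0 < t := ht
    have hn := ss_one_sub_nonneg hc.le (rpow_nonneg h0.le a)
    simp only [Pi.mul_apply, norm_mul, Real.norm_eq_abs, abs_neg]
    rw [abs_of_nonneg hn, abs_of_pos (by positivity : 0 < 1 / s),
      abs_of_pos (by positivity : 0 < t ^ (-s))]
    calc _ ≤ (c * t ^ a) * (1 / s * t ^ (-s)) := by gcongr; exact ss_one_sub_le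
      _ = _ := by rw [show a - s = a + (-s) by ring, rpow_add h0]; ring
  · have h1 : Tendsto (fun t : ℝ => (1 / s) * t ^ (-s)) atTop (𝓝 0) := by
      simpa using (tendsto_rpow_neg_atTop hs).const_mul (1 / s)
    refine squeeze_zero_norm' ?_ h1
    filter_upwards [eventually_gt_atTop 0] with t h0
    have hn := ss_one_sub_nonneg hc.le (rpow_nonneg h0.le a)
    simp only [Pi.mul_apply, norm_mul, Real.norm_eq_abs, abs_neg]
    rw [abs_of_nonneg hn, abs_of_pos (by positivity : 0 < 1 / s),
      abs_of_pos (by positivity : 0 < t ^ (-s))]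
    have : 1 - Real.exp (-c * t ^ a) ≤ 1 := by linarith [Real.exp_pos (-c * t ^ a)]
    calc _ ≤ 1 * (1 / s * t ^ (-s)) := by gcongr
      _ = _ := one_mul _

lemma ss_B {a s c : ℝ} (hs : 0 < s) (hsa : s < a) (hc : 0 ≤ c) :
    ∫⁻ t in Set.Ioi (0:ℝ), ENNReal.ofReal (t ^ (-s - 1) * (1 - Real.exp (-c * t ^ a))) =
      ENNReal.ofReal (c ^ (s / a) * (Real.Gamma (1 - s / a) / |s|)) := by
  rcases hc.eq_or_lt with rfl | hc
  · simp [zero_rpow (div_pos hs (hs.trans hsa)).ne']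
  rw [← ss_B_eq hs hsa hc, ofReal_integral_eq_lintegral_ofReal (ss_B_int hs hsa hc.le)]
  filter_upwards [ae_restrict_mem measurableSet_Ioi] with t ht
  have : (0:ℝ) < t := ht
  exact mul_nonneg (by positivity) (ss_one_sub_nonneg hc.le (by positivity))

lemma ss_gauss {s : ℝ} (hs : -1 < s) :
    ∫ z, |z| ^ s ∂(gaussianReal 0 1) = 2 ^ (s / 2) * Real.Gamma ((1 + s) / 2) / √π := by
  rw [integral_gaussianReal_eq_integral_smul one_ne_zero]
  have h : ∀ z : ℝ, gaussianPDFReal 0 1 z • |z| ^ s =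
      (fun y : ℝ => (√(2 * π))⁻¹ * (y ^ s * Real.exp (-(1/2) * y ^ (2:ℝ)))) |z| := by
    intro z
    simp [gaussianPDFReal]
    ring_nf
  simp_rw [h]
  rw [integral_comp_abs (f := fun y : ℝ => (√(2 * π))⁻¹ * (y ^ s * Real.exp (-(1/2) * y ^ (2:ℝ)))),
    integral_const_mul, _root_.integral_rpow_mul_exp_neg_mul_rpow two_pos hs (by norm_num)]
  rw [one_div, Real.inv_rpow zero_le_two, ← Real.rpow_neg zero_le_two,
    show -(-(s + 1) / 2) = s / 2 + 1 / 2 by ring, rpow_add two_pos, ← Real.sqrt_eq_rpow,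
    Real.sqrt_mul zero_le_two, add_comm s 1]
  field_simp

lemma ss_gauss_int {s : ℝ} (hs : -1 < s) :
    Integrable (fun z : ℝ => |z| ^ s) (gaussianReal 0 1) := by
  by_contra h
  have h1 := ss_gauss hs
  rw [integral_undef h] at h1
  have : 0 < Real.Gamma ((1 + s) / 2) := Real.Gamma_pos_of_pos (by linarith)
  have : 0 < 2 ^ (s / 2) * Real.Gamma ((1 + s) / 2) / √π := by positivity
  linarith

lemma ss_duality {Ω : Type*} [MeasurableSpace Ω] (μ : Measure Ω)
    [IsProbabilityMeasure μ] (α : ℝ)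
    (X : Ω → ℝ) (hX : Measurable X)
    (hchar : ∀ t : ℝ,
      ∫ ω, Complex.exp (Complex.I * (t : ℂ) * (X ω : ℂ)) ∂μ =
        ((Real.exp (-|t| ^ α) : ℝ) : ℂ)) {t : ℝ} (ht : 0 < t) :
    ∫ ω, Real.exp (-(X ω ^ 2 / 2) * t ^ (2:ℝ)) ∂μ =
      ∫ z, Real.exp (-(|z| ^ α) * t ^ α) ∂(gaussianReal 0 1) := by
  have hsw := integral_integral_swap (μ := μ) (ν := gaussianReal 0 1)
    (f := fun ω z => Complex.exp (Complex.I * ((t * z : ℝ) : ℂ) * (X ω : ℂ))) (by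
      refine Integrable.of_bound (C := 1) ?_ ?_
      · apply Measurable.aestronglyMeasurable
        unfold Function.uncurry
        fun_prop
      · refine ae_of_all _ fun p => ?_
        simp only [Function.uncurry]
        rw [show Complex.I * ((t * p.2 : ℝ) : ℂ) * (X p.1 : ℂ) = ((t * p.2 * X p.1 : ℝ) : ℂ) * Complex.I by
          push_cast; ring, Complex.norm_exp_ofReal_mul_I])
  simp_rw [hchar] at hsw
  have h2 : ∀ ω, ∫ z, Complex.exp (Complex.I * ((t * z : ℝ) : ℂ) * (X ω : ℂ)) ∂(gaussianReal 0 1)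
      = ((Real.exp (-(X ω ^ 2 / 2) * t ^ (2:ℝ)) : ℝ) : ℂ) := by
    intro ω
    have h := charFun_gaussianReal (μ := 0) (v := 1) (t * X ω)
    rw [charFun_apply_real] at h
    rw [Real.rpow_two]
    push_cast at h ⊢
    convert h using 1
    · congr 1; ext z; congr 1; ring
    · congr 1; ring
  simp_rw [h2] at hsw
  rw [integral_complex_ofReal, integral_complex_ofReal] at hsw
  have := Complex.ofReal_injective hsw
  rw [this]
  congr 1; ext z
  rw [abs_mul, abs_of_pos ht, Real.mul_rpow ht.le (abs_nonneg z)]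
  congr 1; ring

lemma ss_exp_int {Ω : Type*} [MeasurableSpace Ω] (m : Measure Ω) [IsProbabilityMeasure m]
    {c : Ω → ℝ} (hc : Measurable c) (hc0 : ∀ ω, 0 ≤ c ω) {y : ℝ} (hy : 0 ≤ y) :
    Integrable (fun ω => Real.exp (-(c ω) * y)) m := by
  refine Integrable.of_bound (C := 1) (by fun_prop) (ae_of_all _ fun ω => ?_)
  rw [Real.norm_of_nonneg (Real.exp_pos _).le]
  exact Real.exp_le_one_iff.2 (by nlinarith [mul_nonneg (hc0 ω) hy])

lemma ss_swap1 {Ω : Type*} [MeasurableSpace Ω] (m : Measure Ω) [IsProbabilityMeasure m]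
    {c : Ω → ℝ} (hc : Measurable c) (hc0 : ∀ ω, 0 ≤ c ω) (a r : ℝ) :
    ∫⁻ ω, (∫⁻ t in Set.Ioi (0:ℝ), ENNReal.ofReal (t ^ r * Real.exp (-(c ω) * t ^ a))) ∂m =
      ∫⁻ t in Set.Ioi (0:ℝ), ENNReal.ofReal (t ^ r * ∫ ω, Real.exp (-(c ω) * t ^ a) ∂m) := by
  rw [lintegral_lintegral_swap (by unfold Function.uncurry; fun_prop)]
  refine setLIntegral_congr_fun measurableSet_Ioi fun t ht => ?_
  have ht : (0:ℝ) < t := ht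
  rw [← integral_const_mul, ofReal_integral_eq_lintegral_ofReal]
  · exact (ss_exp_int m hc hc0 (by positivity)).const_mul _
  · exact ae_of_all _ fun ω => by simp only [Pi.zero_apply]; positivity

lemma ss_swap2 {Ω : Type*} [MeasurableSpace Ω] (m : Measure Ω) [IsProbabilityMeasure m]
    {c : Ω → ℝ} (hc : Measurable c) (hc0 : ∀ ω, 0 ≤ c ω) (a r : ℝ) :
    ∫⁻ ω, (∫⁻ t in Set.Ioi (0:ℝ), ENNReal.ofReal (t ^ r * (1 - Real.exp (-(c ω) * t ^ a)))) ∂m =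
      ∫⁻ t in Set.Ioi (0:ℝ),
        ENNReal.ofReal (t ^ r * (1 - ∫ ω, Real.exp (-(c ω) * t ^ a) ∂m)) := by
  rw [lintegral_lintegral_swap (by unfold Function.uncurry; fun_prop)]
  refine setLIntegral_congr_fun measurableSet_Ioi fun t ht => ?_
  have ht : (0:ℝ) < t := ht
  have hi := ss_exp_int m hc hc0 (y := t ^ a) (by positivity)
  have h1 : 1 - ∫ ω, Real.exp (-(c ω) * t ^ a) ∂m =
      ∫ ω, (1 - Real.exp (-(c ω) * t ^ a)) ∂m := by
    rw [integral_sub (integrable_const _) hi]; simp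
  rw [h1, ← integral_const_mul, ofReal_integral_eq_lintegral_ofReal]
  · exact ((integrable_const _).sub hi).const_mul _
  · exact ae_of_all _ fun ω =>
      mul_nonneg (by positivity) (ss_one_sub_nonneg (hc0 ω) (by positivity))

lemma ss_toReal {Ω : Type*} [MeasurableSpace Ω] (m : Measure Ω) {f : Ω → ℝ} (hf : Measurable f)
    (hf0 : ∀ ω, 0 ≤ f ω) (C : ℝ) (hC : 0 ≤ C) :
    (∫⁻ ω, ENNReal.ofReal (f ω * C) ∂m).toReal = (∫ ω, f ω ∂m) * C := by
  rw [← integral_mul_const, integral_eq_lintegral_of_nonneg_ae]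
  · exact ae_of_all _ fun ω => mul_nonneg (hf0 ω) hC
  · fun_prop

lemma ss_pow2 (x s : ℝ) : (x ^ 2 / 2) ^ (s / 2) = |x| ^ s * 2 ^ (-(s / 2)) := by
  rw [← sq_abs, Real.div_rpow (by positivity) zero_le_two, ← Real.rpow_natCast,
    ← Real.rpow_mul (abs_nonneg x), Real.rpow_neg zero_le_two]
  congr 2
  push_cast; ring

lemma ss_powa (x s : ℝ) {α : ℝ} (hα : 0 < α) : (|x| ^ α) ^ (s / α) = |x| ^ s := by
  rw [← Real.rpow_mul (abs_nonneg x)]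
  congr 1
  field_simp

/-- If `X` is a symmetric `α`-stable random variable (`0 < α ≤ 2`), i.e. its characteristic
function is `E[e^(itX)] = e^(-|t|^α)`, then for every real `s` with `-1 < s < α`,
`E[|X|^s] = 2^s Γ((1+s)/2) Γ(1 - s/α) / (√π Γ(1 - s/2))`. -/
theorem symmetric_stable_abs_moment {Ω : Type*} [MeasurableSpace Ω] (μ : Measure Ω)
    [IsProbabilityMeasure μ]
    (α : ℝ) (hα₁ : 0 < α) (hα₂ : α ≤ 2)
    (X : Ω → ℝ) (hX : Measurable X)
    (hchar : ∀ t : ℝ,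
      ∫ ω, Complex.exp (Complex.I * (t : ℂ) * (X ω : ℂ)) ∂μ =
        ((Real.exp (-|t| ^ α) : ℝ) : ℂ))
    (s : ℝ) (hs₁ : -1 < s) (hs₂ : s < α) :
    ∫ ω, |X ω| ^ s ∂μ =
      2 ^ s * Real.Gamma ((1 + s) / 2) * Real.Gamma (1 - s / α) /
        (Real.sqrt π * Real.Gamma (1 - s / 2)) := by
  rcases eq_or_ne s 0 with rfl | hs0
  · have hpi : √π ≠ 0 := by positivity
    have := Real.Gamma_one_half_eq
    rw [one_div] at this
    simp [this, hpi]
  have hG2 : 0 < Real.Gamma (1 - s / 2) := Real.Gamma_pos_of_pos (by linarith)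
  have hGα : 0 < Real.Gamma (1 - s / α) :=
    Real.Gamma_pos_of_pos (by rw [sub_pos, div_lt_one hα₁]; exact hs₂)
  have habs : 0 < |s| := abs_pos.2 hs0
  have hcX : Measurable fun ω => X ω ^ 2 / 2 := by fun_prop
  have hcZ : Measurable fun z : ℝ => |z| ^ α := by fun_prop
  have hcX0 : ∀ ω, 0 ≤ X ω ^ 2 / 2 := fun ω => by positivity
  have hcZ0 : ∀ z : ℝ, 0 ≤ |z| ^ α := fun z => by positivity
  have main : ∫⁻ ω, ENNReal.ofReal (|X ω| ^ s * (2 ^ (-(s / 2)) * (Real.Gamma (1 - s / 2) / |s|))) ∂μ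
      = ∫⁻ z, ENNReal.ofReal (|z| ^ s * (Real.Gamma (1 - s / α) / |s|)) ∂(gaussianReal 0 1) := by
    rcases hs0.lt_or_gt with hs | hs
    · have hZ : ∀ᵐ z ∂(gaussianReal 0 1), z ≠ 0 := by
        have := nullSingletonClass_gaussianReal (μ := 0) (v := 1) one_ne_zero
        exact Measure.ae_ne _ 0
      have e2 : ∫⁻ z, (∫⁻ t in Set.Ioi (0:ℝ),
          ENNReal.ofReal (t ^ (-s - 1) * Real.exp (-(|z| ^ α) * t ^ α))) ∂(gaussianReal 0 1) =
          ∫⁻ z, ENNReal.ofReal (|z| ^ s * (Real.Gamma (1 - s / α) / |s|)) ∂(gaussianReal 0 1) := by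
        refine lintegral_congr_ae ?_
        filter_upwards [hZ] with z hz
        have : 0 < |z| := abs_pos.2 hz
        rw [ss_A hα₁ hs (by positivity), ss_powa z s hα₁]
      have e1 : ∫⁻ ω, (∫⁻ t in Set.Ioi (0:ℝ),
          ENNReal.ofReal (t ^ (-s - 1) * Real.exp (-(X ω ^ 2 / 2) * t ^ (2:ℝ)))) ∂μ =
          ∫⁻ z, ENNReal.ofReal (|z| ^ s * (Real.Gamma (1 - s / α) / |s|)) ∂(gaussianReal 0 1) := by
        rw [← e2, ss_swap1 μ hcX hcX0, ss_swap1 _ hcZ hcZ0]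
        refine setLIntegral_congr_fun measurableSet_Ioi fun t ht => ?_
        rw [ss_duality μ α X hX hchar ht]
      have hfin : ∫⁻ z, ENNReal.ofReal (|z| ^ s * (Real.Gamma (1 - s / α) / |s|))
          ∂(gaussianReal 0 1) ≠ ⊤ :=
        ((ss_gauss_int hs₁).mul_const _).lintegral_lt_top.ne
      have hX0 : ∀ᵐ ω ∂μ, X ω ≠ 0 := by
        rw [← e1] at hfin
        have := ae_lt_top (by
          apply Measurable.lintegral_prod_right'
            (f := fun p : Ω × ℝ => ENNReal.ofReal (p.2 ^ (-s - 1) *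
              Real.exp (-(X p.1 ^ 2 / 2) * p.2 ^ (2:ℝ))))
          fun_prop) hfin
        filter_upwards [this] with ω hω h0
        rw [h0] at hω
        simp [ss_A0] at hω
      rw [← e1]
      refine lintegral_congr_ae ?_
      filter_upwards [hX0] with ω hω
      rw [ss_A two_pos hs (by positivity), ss_pow2, mul_assoc]
    · have e2 : ∫⁻ z, (∫⁻ t in Set.Ioi (0:ℝ),
          ENNReal.ofReal (t ^ (-s - 1) * (1 - Real.exp (-(|z| ^ α) * t ^ α)))) ∂(gaussianReal 0 1) =
          ∫⁻ z, ENNReal.ofReal (|z| ^ s * (Real.Gamma (1 - s / α) / |s|)) ∂(gaussianReal 0 1) := by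
        refine lintegral_congr fun z => ?_
        rw [ss_B hs hs₂ (hcZ0 z), ss_powa z s hα₁]
      have e1 : ∫⁻ ω, (∫⁻ t in Set.Ioi (0:ℝ),
          ENNReal.ofReal (t ^ (-s - 1) * (1 - Real.exp (-(X ω ^ 2 / 2) * t ^ (2:ℝ))))) ∂μ =
          ∫⁻ ω, ENNReal.ofReal
            (|X ω| ^ s * (2 ^ (-(s / 2)) * (Real.Gamma (1 - s / 2) / |s|))) ∂μ := by
        refine lintegral_congr fun ω => ?_
        rw [ss_B hs (by linarith) (hcX0 ω), ss_pow2, mul_assoc]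
      rw [← e1, ← e2, ss_swap2 μ hcX hcX0, ss_swap2 _ hcZ hcZ0]
      refine setLIntegral_congr_fun measurableSet_Ioi fun t ht => ?_
      rw [ss_duality μ α X hX hchar ht]
  have h := congrArg ENNReal.toReal main
  rw [ss_toReal μ (by fun_prop) (fun ω => by positivity) _ (by positivity),
    ss_toReal _ (by fun_prop) (fun ω => by positivity) _ (by positivity), ss_gauss hs₁,
    Real.rpow_neg zero_le_two] at h
  have h2 : (2:ℝ) ^ s = 2 ^ (s / 2) * 2 ^ (s / 2) := by
    rw [← rpow_add two_pos]; congr 1; ring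
  have hp : (0:ℝ) < 2 ^ (s / 2) := by positivity
  have hpi : 0 < √π := by positivity
  rw [h2]
  generalize Real.Gamma (1 - s / 2) = A at h hG2 ⊢
  generalize Real.Gamma (1 - s / α) = B at h ⊢
  field_simp at h ⊢
  linear_combination h
end
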